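/- All irreducible representatives of a given S-equivalence class of skew-symmetric augmented matrices have the same dimension: if (B' | A') and (B'' | A'') are irreducible and S-equivalent, then their dimensions are equal. -/

import Mathlib

/-- A skew-symmetric augmented matrix `(B ∣ A)` of dimension `n`:
`B` is an `n × n` integer matrix with `Bᵀ = -B` and `A` is an integer
column vector of length `n`.  Dimension `0` gives the empty matrix. -/
structure SkewAug where
  n : ℕ
  B : Matrix (Fin n) (Fin n) ℤ
  A : Fin n → ℤ
  skew : B.transpose = -B

namespace SkewAug

/-- The permutation matrix of a permutation `σ` of `Fin n`. -/
def permMatrixOf {n : ℕ} (σ : Equiv.Perm (Fin n)) : Matrix (Fin n) (Fin n) ℤ :=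
  Matrix.of fun i j => if σ j = i then 1 else 0

/-- `P` is a permutation matrix. -/
def IsPermMatrix {n : ℕ} (P : Matrix (Fin n) (Fin n) ℤ) : Prop :=
  ∃ σ : Equiv.Perm (Fin n), P = permMatrixOf σ

/-- `PermStep M N` : `N` is a permutation of `M`, i.e. there is a permutation
matrix `P` with `N = (P M.B Pᵀ ∣ P M.A)`. -/
def PermStep (M N : SkewAug) : Prop :=
  ∃ (h : M.n = N.n) (P : Matrix (Fin N.n) (Fin N.n) ℤ),
    IsPermMatrix P ∧
    N.B = P * (Matrix.reindex (finCongr h) (finCongr h) M.B) * P.transpose ∧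
    N.A = P.mulVec (fun i => M.A (Fin.cast h.symm i))

/-- `DeleteAt M S N` : `N` is obtained from `M` by deleting the rows and
columns of `M.B` indexed by `S` and the entries of `M.A` indexed by `S`. -/
def DeleteAt (M : SkewAug) (S : Set (Fin M.n)) (N : SkewAug) : Prop :=
  ∃ e : Fin N.n → Fin M.n, StrictMono e ∧ (∀ k, k ∈ Set.range e ↔ k ∉ S) ∧
    (∀ i j, N.B i j = M.B (e i) (e j)) ∧ (∀ i, N.A i = M.A (e i))

/-- The condition allowing a reduction of type 1 at index `j`:
`A j = 0` and the `j`-th column of `B` is the zero vector or equals `A`. -/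
def Red1Cond (M : SkewAug) (j : Fin M.n) : Prop :=
  M.A j = 0 ∧ ((∀ i, M.B i j = 0) ∨ (∀ i, M.B i j = M.A i))

/-- The condition allowing a reduction of type 2 at distinct indices `r, t`:
`A r = -A t` and the sum of the `r`-th and `t`-th columns of `B` equals `A`. -/
def Red2Cond (M : SkewAug) (r t : Fin M.n) : Prop :=
  r ≠ t ∧ M.A r = -M.A t ∧ ∀ i, M.B i r + M.B i t = M.A i

/-- `N` is obtained from `M` by a reduction of type 1. -/
def Red1 (M N : SkewAug) : Prop :=
  ∃ j : Fin M.n, Red1Cond M j ∧ DeleteAt M {j} N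

/-- `N` is obtained from `M` by a reduction of type 2. -/
def Red2 (M N : SkewAug) : Prop :=
  ∃ r t : Fin M.n, Red2Cond M r t ∧ DeleteAt M {r, t} N

/-- A single move: a permutation, a reduction of type 1 or 2, or an
extension of type 1 or 2 (the inverse of a reduction). -/
def Move (M N : SkewAug) : Prop :=
  PermStep M N ∨ Red1 M N ∨ Red2 M N ∨ Red1 N M ∨ Red2 N M

/-- S-equivalence: `M` can be transformed into `N` by a finite sequence of
moves. -/
def SEquiv : SkewAug → SkewAug → Prop :=
  Relation.ReflTransGen Move

/-- A reduction of type 1 or type 2 can be applied to `M`. -/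
def Reducible (M : SkewAug) : Prop :=
  (∃ j, Red1Cond M j) ∨ (∃ r t, Red2Cond M r t)

/-- `M` is irreducible: no reduction of type 1 or type 2 can be applied. -/
def Irreducible (M : SkewAug) : Prop := ¬ Reducible M

/-- The empty skew-symmetric augmented matrix. -/
def empty : SkewAug := ⟨0, 0, 0, by simp⟩

/-- `M` is trivial if it is S-equivalent to the empty matrix. -/
def Trivial (M : SkewAug) : Prop := SEquiv M empty

end SkewAug

/-!
Admit any renumbering of the remaining indices after a deletion, and admit deleting nothing at all.
The resulting reduction relation contains the permutations and has the diamond property. If two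
removable index sets are disjoint, each stays removable after the other is deleted. If they share
an index `x`, one of the two results reduces to the other:
* if `{x}` and `{x, t}` are removable, then so is `{t}`, because column `t` is `A` minus column `x`;
* if `{x, t}` and `{x, u}` are removable, then `t` and `u` have equal rows, columns and entries, so
  exchanging them is a symmetry of `(B ∣ A)` which matches the two results.

Hence S-equivalent matrices have a common reduct, and all reducts of an irreducible matrix are
permutations of it.
-/

namespace SkewAug

variable {K M N : SkewAug}

lemma B_eq_neg_B (M : SkewAug) (i j : Fin M.n) : M.B i j = -M.B j i :=
  congrFun₂ M.skew j i

/-- `IsEmbedding N M e`: the injective index map `e` identifies `N` with a principal submatrix of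
`M`. It need not be increasing, so that renumberings are embeddings too. -/
structure IsEmbedding (N M : SkewAug) (e : Fin N.n → Fin M.n) : Prop where
  injective : Function.Injective e
  B_apply : ∀ i j, N.B i j = M.B (e i) (e j)
  A_apply : ∀ i, N.A i = M.A (e i)

namespace IsEmbedding

protected lemma id (M : SkewAug) : IsEmbedding M M id :=
  ⟨Function.injective_id, fun _ _ => rfl, fun _ => rfl⟩

lemma comp {e : Fin N.n → Fin M.n} {f : Fin K.n → Fin N.n} (he : IsEmbedding N M e)
    (hf : IsEmbedding K N f) : IsEmbedding K M (e ∘ f) where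
  injective := he.injective.comp hf.injective
  B_apply i j := (hf.B_apply i j).trans (he.B_apply _ _)
  A_apply i := (hf.A_apply i).trans (he.A_apply _)

lemma of_comp {e : Fin N.n → Fin M.n} {g : Fin K.n → Fin N.n} (he : IsEmbedding N M e)
    (heg : IsEmbedding K M (e ∘ g)) : IsEmbedding K N g where
  injective := heg.injective.of_comp
  B_apply i j := (heg.B_apply i j).trans (he.B_apply _ _).symm
  A_apply i := (heg.A_apply i).trans (he.A_apply _).symm

lemma symm {σ : Fin N.n ≃ Fin M.n} (hσ : IsEmbedding N M σ) : IsEmbedding M N σ.symm :=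
  hσ.of_comp (by simpa only [Equiv.self_comp_symm] using IsEmbedding.id M)

lemma exists_comp_eq {e : Fin N.n → Fin M.n} {f : Fin K.n → Fin M.n} (he : IsEmbedding N M e)
    (hf : IsEmbedding K M f) (hfe : Set.range f ⊆ Set.range e) :
    ∃ g, IsEmbedding K N g ∧ e ∘ g = f := by
  obtain ⟨g, rfl⟩ := Set.range_subset_range_iff_exists_comp.mp hfe
  exact ⟨g, he.of_comp hf, rfl⟩

end IsEmbedding

/-- The principal submatrix of `M` on the indices in `S`, listed in increasing order. -/
def restrict (M : SkewAug) (S : Finset (Fin M.n)) : SkewAug where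
  n := S.card
  B := M.B.submatrix (S.orderEmbOfFin rfl) (S.orderEmbOfFin rfl)
  A := M.A ∘ S.orderEmbOfFin rfl
  skew := by
    rw [Matrix.transpose_submatrix, M.skew]
    rfl

lemma isEmbedding_restrict (M : SkewAug) (S : Finset (Fin M.n)) :
    IsEmbedding (M.restrict S) M (S.orderEmbOfFin rfl) :=
  ⟨(S.orderEmbOfFin rfl).injective, fun _ _ => rfl, fun _ => rfl⟩

lemma exists_isEmbedding_range_eq (M : SkewAug) (S : Set (Fin M.n)) :
    ∃ (K : SkewAug) (f : Fin K.n → Fin M.n), IsEmbedding K M f ∧ Set.range f = S := by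
  lift S to Finset (Fin M.n) using S.toFinite
  exact ⟨M.restrict S, _, M.isEmbedding_restrict S, S.range_orderEmbOfFin rfl⟩

lemma permMatrixOf_eq_permMatrix {n : ℕ} (σ : Equiv.Perm (Fin n)) :
    permMatrixOf σ = Equiv.Perm.permMatrix ℤ σ.symm := by
  ext i j
  simp [permMatrixOf, Equiv.Perm.permMatrix, PEquiv.toMatrix_apply, Equiv.symm_apply_eq,
    eq_comm (a := i)]

lemma permMatrixOf_mul_mul_transpose {n : ℕ} (σ : Equiv.Perm (Fin n))
    (B : Matrix (Fin n) (Fin n) ℤ) :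
    permMatrixOf σ * B * (permMatrixOf σ).transpose = B.submatrix σ.symm σ.symm := by
  rw [permMatrixOf_eq_permMatrix, Matrix.transpose_permMatrix, PEquiv.toMatrix_toPEquiv_mul,
    PEquiv.mul_toMatrix_toPEquiv, Matrix.submatrix_submatrix]
  rfl

lemma permMatrixOf_mulVec {n : ℕ} (σ : Equiv.Perm (Fin n)) (v : Fin n → ℤ) :
    (permMatrixOf σ).mulVec v = v ∘ σ.symm := by
  rw [permMatrixOf_eq_permMatrix, Matrix.permMatrix_mulVec]

lemma permStep_iff_exists_isEmbedding :
    PermStep M N ↔ ∃ σ : Fin N.n ≃ Fin M.n, IsEmbedding N M σ := by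
  constructor
  · rintro ⟨h, _, ⟨σ, rfl⟩, hB, hA⟩
    rw [permMatrixOf_mul_mul_transpose] at hB
    rw [permMatrixOf_mulVec] at hA
    exact ⟨σ.symm.trans (finCongr h.symm), Equiv.injective _, congrFun₂ hB, congrFun hA⟩
  · rintro ⟨σ, hσ⟩
    have h : M.n = N.n := Fin.equiv_iff_eq.mp ⟨σ.symm⟩
    refine ⟨h, _, ⟨(finCongr h.symm).trans σ.symm, rfl⟩, ?_, ?_⟩
    · rw [permMatrixOf_mul_mul_transpose]
      exact Matrix.ext hσ.B_apply
    · rw [permMatrixOf_mulVec]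
      exact funext hσ.A_apply

lemma PermStep.refl (M : SkewAug) : PermStep M M :=
  permStep_iff_exists_isEmbedding.mpr ⟨Equiv.refl _, .id M⟩

lemma PermStep.symm (h : PermStep M N) : PermStep N M := by
  obtain ⟨σ, hσ⟩ := permStep_iff_exists_isEmbedding.mp h
  exact permStep_iff_exists_isEmbedding.mpr ⟨σ.symm, hσ.symm⟩

lemma PermStep.trans (hMN : PermStep M N) (hNK : PermStep N K) : PermStep M K := by
  obtain ⟨σ, hσ⟩ := permStep_iff_exists_isEmbedding.mp hMN
  obtain ⟨τ, hτ⟩ := permStep_iff_exists_isEmbedding.mp hNK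
  exact permStep_iff_exists_isEmbedding.mpr ⟨τ.trans σ, hσ.comp hτ⟩

lemma Red2Cond.symm {r t : Fin M.n} (h : Red2Cond M r t) : Red2Cond M t r := by
  obtain ⟨hne, hA, hB⟩ := h
  exact ⟨hne.symm, by rw [hA, neg_neg], fun i => by rw [add_comm, hB]⟩

lemma Red1Cond.of_red2Cond {r t : Fin M.n} (hr : Red1Cond M r) (hrt : Red2Cond M r t) :
    Red1Cond M t := by
  obtain ⟨hAr, hBr⟩ := hr
  obtain ⟨-, hA, hB⟩ := hrt
  refine ⟨by rwa [hAr, zero_eq_neg] at hA, ?_⟩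
  rcases hBr with hzero | hcol
  · exact .inr fun i => by simpa only [hzero, zero_add] using hB i
  · exact .inl fun i => by simpa only [hcol, add_eq_left] using hB i

lemma isEmbedding_swap {t u : Fin M.n} (hA : M.A t = M.A u) (hB : ∀ i, M.B i t = M.B i u) :
    IsEmbedding M M (Equiv.swap t u) := by
  have hA' (i) : M.A (Equiv.swap t u i) = M.A i := by
    rw [Equiv.swap_apply_def]
    split_ifs with h h <;> simp only [h, hA]
  have hB' (i j) : M.B i (Equiv.swap t u j) = M.B i j := by
    rw [Equiv.swap_apply_def]
    split_ifs with h h <;> simp only [h, hB]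
  refine ⟨(Equiv.swap t u).injective, fun i j => ?_, fun i => (hA' i).symm⟩
  rw [hB', M.B_eq_neg_B, M.B_eq_neg_B (Equiv.swap t u i), hB']

lemma Red2Cond.isEmbedding_swap {r t u : Fin M.n} (ht : Red2Cond M r t) (hu : Red2Cond M r u) :
    IsEmbedding M M (Equiv.swap t u) :=
  SkewAug.isEmbedding_swap (neg_injective (ht.2.1.symm.trans hu.2.1))
    fun i => add_left_cancel ((ht.2.2 i).trans (hu.2.2 i).symm)

/-- The index sets that a single reduction of `M` may delete; the empty set is included so that
renumberings count as reductions. -/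
inductive Removable (M : SkewAug) : Set (Fin M.n) → Prop
  | empty : Removable M ∅
  | singleton {j : Fin M.n} (h : Red1Cond M j) : Removable M {j}
  | pair {r t : Fin M.n} (h : Red2Cond M r t) : Removable M {r, t}

lemma Removable.red1Cond_or_red2Cond {S : Set (Fin M.n)} (hS : M.Removable S) {x : Fin M.n}
    (hx : x ∈ S) : (Red1Cond M x ∧ S = {x}) ∨ ∃ t, Red2Cond M x t ∧ S = {x, t} := by
  cases hS with
  | empty => exact absurd hx (Set.notMem_empty x)
  | singleton h =>
    obtain rfl := hx
    exact .inl ⟨h, rfl⟩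
  | @pair r t h =>
    obtain rfl | rfl := hx
    · exact .inr ⟨t, h, rfl⟩
    · exact .inr ⟨r, h.symm, Set.pair_comm _ _⟩

lemma Irreducible.eq_empty_of_removable (hM : M.Irreducible) {S : Set (Fin M.n)}
    (hS : M.Removable S) : S = ∅ := by
  cases hS with
  | empty => rfl
  | singleton h => exact absurd (.inl ⟨_, h⟩) hM
  | pair h => exact absurd (.inr ⟨_, _, h⟩) hM

lemma IsEmbedding.removable_preimage {e : Fin N.n → Fin M.n} (he : IsEmbedding N M e)
    {T : Set (Fin M.n)} (hT : M.Removable T) (hTe : T ⊆ Set.range e) :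
    N.Removable (e ⁻¹' T) := by
  cases hT with
  | empty => exact .empty
  | singleton h =>
    obtain ⟨j, rfl⟩ := hTe rfl
    rw [← Set.image_singleton, he.injective.preimage_image]
    refine .singleton ⟨by rw [he.A_apply, h.1], h.2.imp ?_ ?_⟩ <;> intro hB i
    · rw [he.B_apply, hB]
    · rw [he.B_apply, he.A_apply, hB]
  | pair h =>
    obtain ⟨r, rfl⟩ := hTe (.inl rfl)
    obtain ⟨t, rfl⟩ := hTe (.inr rfl)
    obtain ⟨hne, hA, hB⟩ := h
    rw [← Set.image_pair, he.injective.preimage_image]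
    refine .pair ⟨ne_of_apply_ne e hne, by rw [he.A_apply, he.A_apply, hA], fun i => ?_⟩
    rw [he.B_apply, he.B_apply, he.A_apply, hB]

/-- `ReducesTo M N`: up to renumbering, `N` is `M` or the result of one reduction of `M`. -/
def ReducesTo (M N : SkewAug) : Prop :=
  ∃ e : Fin N.n → Fin M.n, IsEmbedding N M e ∧ M.Removable (Set.range e)ᶜ

lemma IsEmbedding.reducesTo {e : Fin N.n → Fin M.n} {f : Fin K.n → Fin M.n}
    (he : IsEmbedding N M e) (hf : IsEmbedding K M f) (hfe : Set.range f ⊆ Set.range e)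
    (hrem : M.Removable (Set.range e \ Set.range f)) : ReducesTo N K := by
  obtain ⟨g, hg, rfl⟩ := he.exists_comp_eq hf hfe
  have hpre : e ⁻¹' (Set.range e \ Set.range (e ∘ g)) = (Set.range g)ᶜ := by
    rw [Set.preimage_sdiff, Set.preimage_range, Set.range_comp, he.injective.preimage_image,
      Set.compl_eq_univ_sdiff]
  exact ⟨g, hg, hpre ▸ he.removable_preimage hrem Set.sdiff_subset⟩

lemma PermStep.reducesTo_trans (h : PermStep M N) (hNK : ReducesTo N K) : ReducesTo M K := by
  obtain ⟨σ, hσ⟩ := permStep_iff_exists_isEmbedding.mp h.symm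
  obtain ⟨f, hf, hrem⟩ := hNK
  rw [Set.compl_eq_univ_sdiff, ← σ.range_eq_univ] at hrem
  exact hσ.reducesTo hf (by simp only [σ.range_eq_univ, Set.subset_univ]) hrem

lemma ReducesTo.refl (M : SkewAug) : ReducesTo M M :=
  ⟨_, .id M, by simpa only [Set.range_id, Set.compl_univ] using Removable.empty⟩

lemma PermStep.reducesTo (h : PermStep M N) : ReducesTo M N :=
  h.reducesTo_trans (.refl N)

lemma DeleteAt.reducesTo {S : Set (Fin M.n)} (h : DeleteAt M S N) (hS : M.Removable S) :
    ReducesTo M N := by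
  obtain ⟨e, hmono, hrange, hB, hA⟩ := h
  have hcompl : (Set.range e)ᶜ = S := Set.ext fun k => by
    rw [Set.mem_compl_iff, hrange, not_not]
  exact ⟨e, ⟨hmono.injective, hB, hA⟩, hcompl ▸ hS⟩

lemma Red1.reducesTo (h : Red1 M N) : ReducesTo M N := by
  obtain ⟨_, hj, hdel⟩ := h
  exact hdel.reducesTo (.singleton hj)

lemma Red2.reducesTo (h : Red2 M N) : ReducesTo M N := by
  obtain ⟨_, _, hrt, hdel⟩ := h
  exact hdel.reducesTo (.pair hrt)

lemma Move.reducesTo_or_reducesTo (h : Move M N) : ReducesTo M N ∨ ReducesTo N M := by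
  rcases h with h | h | h | h | h
  · exact .inl h.reducesTo
  · exact .inl h.reducesTo
  · exact .inl h.reducesTo
  · exact .inr h.reducesTo
  · exact .inr h.reducesTo

section Diamond

variable {N₁ N₂ : SkewAug} {e₁ : Fin N₁.n → Fin M.n} {e₂ : Fin N₂.n → Fin M.n}

lemma IsEmbedding.exists_reducesTo_of_disjoint
    (he₁ : IsEmbedding N₁ M e₁) (he₂ : IsEmbedding N₂ M e₂)
    (hrem₁ : M.Removable (Set.range e₁)ᶜ) (hrem₂ : M.Removable (Set.range e₂)ᶜ)
    (hdisj : Disjoint (Set.range e₁)ᶜ (Set.range e₂)ᶜ) :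
    ∃ K, ReducesTo N₁ K ∧ ReducesTo N₂ K := by
  obtain ⟨K, f, hf, hrange⟩ := M.exists_isEmbedding_range_eq (Set.range e₁ ∩ Set.range e₂)
  have hdiff₁ : Set.range e₁ \ Set.range f = (Set.range e₂)ᶜ := by
    rw [hrange, Set.sdiff_self_inter, Set.sdiff_eq,
      Set.inter_eq_right.mpr (Set.disjoint_compl_left_iff_subset.mp hdisj)]
  have hdiff₂ : Set.range e₂ \ Set.range f = (Set.range e₁)ᶜ := by
    rw [hrange, Set.inter_comm, Set.sdiff_self_inter, Set.sdiff_eq,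
      Set.inter_eq_right.mpr (Set.disjoint_compl_left_iff_subset.mp hdisj.symm)]
  exact ⟨K, he₁.reducesTo hf (hrange ▸ Set.inter_subset_left) (hdiff₁ ▸ hrem₂),
    he₂.reducesTo hf (hrange ▸ Set.inter_subset_right) (hdiff₂ ▸ hrem₁)⟩

lemma IsEmbedding.reducesTo_of_range_eq
    (he₁ : IsEmbedding N₁ M e₁) (he₂ : IsEmbedding N₂ M e₂)
    (hrange : Set.range e₁ = Set.range e₂) : ReducesTo N₁ N₂ :=
  he₁.reducesTo he₂ hrange.ge (by rw [hrange, Set.sdiff_self]; exact .empty)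

lemma IsEmbedding.reducesTo_of_compl_range_eq_singleton_of_pair {x t : Fin M.n}
    (he₁ : IsEmbedding N₁ M e₁) (he₂ : IsEmbedding N₂ M e₂)
    (hx : Red1Cond M x) (hxt : Red2Cond M x t)
    (hrange₁ : (Set.range e₁)ᶜ = {x}) (hrange₂ : (Set.range e₂)ᶜ = {x, t}) :
    ReducesTo N₁ N₂ := by
  have hsub : Set.range e₂ ⊆ Set.range e₁ := by
    rw [← Set.compl_subset_compl, hrange₁, hrange₂]
    exact Set.singleton_subset_iff.mpr (.inl rfl)
  have hdiff : Set.range e₁ \ Set.range e₂ = {t} := by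
    rw [← compl_sdiff_compl, hrange₁, hrange₂, Set.pair_sdiff_left hxt.1]
  exact he₁.reducesTo he₂ hsub (hdiff ▸ .singleton (hx.of_red2Cond hxt))

lemma IsEmbedding.reducesTo_of_compl_range_eq_pair_of_pair {x t u : Fin M.n}
    (he₁ : IsEmbedding N₁ M e₁) (he₂ : IsEmbedding N₂ M e₂)
    (hxt : Red2Cond M x t) (hxu : Red2Cond M x u)
    (hrange₁ : (Set.range e₁)ᶜ = {x, t}) (hrange₂ : (Set.range e₂)ᶜ = {x, u}) :
    ReducesTo N₁ N₂ := by
  refine ((hxt.isEmbedding_swap hxu).comp he₁).reducesTo_of_range_eq he₂ (compl_injective ?_)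
  rw [Set.range_comp, ← Set.image_compl_eq (Equiv.swap t u).bijective, hrange₁, hrange₂,
    Set.image_pair, Equiv.swap_apply_left, Equiv.swap_apply_of_ne_of_ne hxt.1 hxu.1]

lemma IsEmbedding.reducesTo_or_reducesTo_of_not_disjoint
    (he₁ : IsEmbedding N₁ M e₁) (he₂ : IsEmbedding N₂ M e₂)
    (hrem₁ : M.Removable (Set.range e₁)ᶜ) (hrem₂ : M.Removable (Set.range e₂)ᶜ)
    (hdisj : ¬Disjoint (Set.range e₁)ᶜ (Set.range e₂)ᶜ) :
    ReducesTo N₁ N₂ ∨ ReducesTo N₂ N₁ := by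
  obtain ⟨x, hx₁, hx₂⟩ := Set.not_disjoint_iff.mp hdisj
  rcases hrem₁.red1Cond_or_red2Cond hx₁ with ⟨h₁, hrange₁⟩ | ⟨t, h₁, hrange₁⟩ <;>
    rcases hrem₂.red1Cond_or_red2Cond hx₂ with ⟨h₂, hrange₂⟩ | ⟨u, h₂, hrange₂⟩
  · exact .inl (he₁.reducesTo_of_range_eq he₂ (compl_injective (hrange₁.trans hrange₂.symm)))
  · exact .inl (he₁.reducesTo_of_compl_range_eq_singleton_of_pair he₂ h₁ h₂ hrange₁ hrange₂)
  · exact .inr (he₂.reducesTo_of_compl_range_eq_singleton_of_pair he₁ h₂ h₁ hrange₂ hrange₁)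
  · exact .inl (he₁.reducesTo_of_compl_range_eq_pair_of_pair he₂ h₁ h₂ hrange₁ hrange₂)

lemma ReducesTo.diamond (h₁ : ReducesTo M N₁) (h₂ : ReducesTo M N₂) :
    ∃ K, ReducesTo N₁ K ∧ ReducesTo N₂ K := by
  obtain ⟨e₁, he₁, hrem₁⟩ := h₁
  obtain ⟨e₂, he₂, hrem₂⟩ := h₂
  by_cases hdisj : Disjoint (Set.range e₁)ᶜ (Set.range e₂)ᶜ
  · exact he₁.exists_reducesTo_of_disjoint he₂ hrem₁ hrem₂ hdisj
  · rcases he₁.reducesTo_or_reducesTo_of_not_disjoint he₂ hrem₁ hrem₂ hdisj with h | h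
    · exact ⟨N₂, h, .refl N₂⟩
    · exact ⟨N₁, .refl N₁, h⟩

end Diamond

open Relation in
lemma SEquiv.join_reflTransGen_reducesTo (h : SEquiv M N) :
    Join (ReflTransGen ReducesTo) M N := by
  have hequiv : Equivalence (Join (ReflTransGen ReducesTo)) :=
    equivalence_join_reflTransGen fun _ _ _ h₁ h₂ =>
      let ⟨K, hK₁, hK₂⟩ := h₁.diamond h₂
      ⟨K, .single hK₁, .single hK₂⟩
  refine reflTransGen_le_of_equivalence_of_le hequiv (fun M N hMN => ?_) M N h
  rcases hMN.reducesTo_or_reducesTo with h | h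
  · exact ⟨N, .single h, .refl⟩
  · exact ⟨M, .refl, .single h⟩

lemma Irreducible.permStep_of_reducesTo (hM : M.Irreducible) (h : ReducesTo M N) :
    PermStep M N := by
  obtain ⟨e, he, hrem⟩ := h
  have hsurj : Function.Surjective e :=
    Set.range_eq_univ.mp (Set.compl_empty_iff.mp (hM.eq_empty_of_removable hrem))
  exact permStep_iff_exists_isEmbedding.mpr ⟨.ofBijective e ⟨he.injective, hsurj⟩, he⟩

lemma Irreducible.permStep_of_reflTransGen_reducesTo (hM : M.Irreducible)
    (h : Relation.ReflTransGen ReducesTo M N) : PermStep M N := by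
  induction h with
  | refl => exact .refl M
  | tail _ hstep ih => exact hM.permStep_of_reducesTo (ih.reducesTo_trans hstep)

end SkewAug

theorem irreducible_sEquiv_dim_eq_general (M N : SkewAug)
    (hM : SkewAug.Irreducible M) (hN : SkewAug.Irreducible N)
    (h : SkewAug.SEquiv M N) :
    SkewAug.PermStep M N := by
  obtain ⟨K, hMK, hNK⟩ := h.join_reflTransGen_reducesTo
  exact (hM.permStep_of_reflTransGen_reducesTo hMK).trans
    (hN.permStep_of_reflTransGen_reducesTo hNK).symm

/-- All irreducible representatives of a given S-equivalence
class of skew-symmetric augmented matrices have the same dimension. -/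
theorem irreducible_sEquiv_dim_eq (M N : SkewAug)
    (hM : SkewAug.Irreducible M) (hN : SkewAug.Irreducible N)
    (h : SkewAug.SEquiv M N) :
    M.n = N.n :=
  (irreducible_sEquiv_dim_eq_general M N hM hN h).fst
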